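/- When n mod 4 is 0 or 3 (resp. 1 or 2), there exists a nondegenerate symmetric (resp. alternating) bilinear form β on the 2^n-dimensional spin representation space of GSpin_{2n+1} over an algebraically closed field k of characteristic zero, such that β(xs, xt) = N(x)·β(s,t) for all x in GSpin_{2n+1}(k) and all vectors s, t, where N is the spinor norm. In particular the spin representation factors through GO_{2^n} (resp. GSp_{2^n}) with similitude character equal to the spinor norm. -/

import Mathlib

/-!
Write `γ i` for the action on `S` of the vectors of an orthonormal basis of `V`: these are `2n+1`
pairwise anticommuting involutions of the `2^n`-dimensional space `S`. It is enough to find a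
nondegenerate form `β` with one common sign `ε` such that `β (γ i s) t = ε β s (γ i t)` for all `i`:
by linearity the same holds for every vector of `V`, hence `β (x s) t = β s (x* t)` for even `x`,
where `x*` is the reverse of `x`, and so `β (x s) (x t) = β s (x* x t) = N(x) β s t`.

Such a form is built by induction on `n` (`exists_form`), with `ε = (-1)^n` and with symmetry sign
`(-1)^(n(n+1)/2)`. Let `a`, `b` be the last two involutions and `I^2 = -1`. Then `h = I a b` is an
involution which commutes with the remaining `γ i` and anticommutes with `a`, so its `+1`-eigenspace
`P` has dimension `2^(n-1)` and carries the remaining `2n-1` involutions, while `S = P ⊕ a P`.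
If `B` is the form on `P` given by induction, the form on `S` for which `P` and `a P` are isotropic
and `β (a u) v = B u v`, `β u (a v) = ε B u v` for `u`, `v` in `P`, has the required properties;
both the adjunction sign and the symmetry sign change in the prescribed way.
-/

universe u

/-- A space of dimension `2^n` with `2n+1` pairwise anticommuting involutions carries a nondegenerate
bilinear form for which all of them are self-adjoint up to the sign `(-1)^n`, and which is
`(-1)^(n(n+1)/2)`-symmetric. Only the values `γ i` with `i < 2n+1` are constrained. -/
theorem exists_form (k : Type*) [Field k] [IsAlgClosed k] [CharZero k] (n : ℕ) :
    ∀ (S : Type u) [AddCommGroup S] [Module k S], Module.finrank k S = 2 ^ n →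
    ∀ γ : ℕ → S →ₗ[k] S,
      (∀ i < 2 * n + 1, ∀ s, γ i (γ i s) = s) →
      (∀ i < 2 * n + 1, ∀ j < 2 * n + 1, i ≠ j → ∀ s, γ i (γ j s) = -γ j (γ i s)) →
      ∃ β : S →ₗ[k] S →ₗ[k] k,
        (∀ s, (∀ t, β s t = 0) → s = 0) ∧
        (∀ s t, β s t = (-1) ^ ((n + 1).choose 2) * β t s) ∧
        (∀ i < 2 * n + 1, ∀ s t, β (γ i s) t = (-1) ^ n * β s (γ i t)) := by
  induction n with
  | zero =>
    intro S _ _ hS γ _ _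
    rw [pow_zero] at hS
    obtain ⟨f⟩ := Module.nonempty_linearEquiv_iff_finrank_eq_one.mpr hS
    refine ⟨(LinearMap.mul k k).compl₁₂ f.symm.toLinearMap f.symm.toLinearMap, ?_, ?_, ?_⟩
    · intro s hs
      simpa using hs (f 1)
    · intro s t
      simp [mul_comm]
    · intro i _ s t
      obtain ⟨c, hc, -⟩ := LinearMap.existsUnique_eq_smul_id_of_finrank_eq_one hS (γ i)
      simp [hc, mul_left_comm]
  | succ n ih =>
    intro S _ _ hS γ hsq hanti
    have : FiniteDimensional k S := .of_finrank_pos (by rw [hS]; positivity)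
    obtain ⟨I, hI⟩ := IsAlgClosed.exists_pow_nat_eq (-1 : k) (n := 2) (by norm_num)
    have hII : I * I = -1 := by rw [← sq, hI]
    obtain ⟨a, ha⟩ : ∃ a, a = γ (2 * n + 1) := ⟨_, rfl⟩
    obtain ⟨b, hb⟩ : ∃ b, b = γ (2 * n + 2) := ⟨_, rfl⟩
    have haa : ∀ s, a (a s) = s := fun s => ha ▸ hsq _ (by omega) s
    have hbb : ∀ s, b (b s) = s := fun s => hb ▸ hsq _ (by omega) s
    have hba : ∀ s, b (a s) = -a (b s) := fun s => by
      rw [ha, hb]; exact hanti _ (by omega) _ (by omega) (by omega) s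
    have hga : ∀ i < 2 * n + 1, ∀ s, a (γ i s) = -γ i (a s) := fun i hi s => by
      rw [ha]; exact hanti _ (by omega) _ (by omega) (by omega) s
    have hgb : ∀ i < 2 * n + 1, ∀ s, b (γ i s) = -γ i (b s) := fun i hi s => by
      rw [hb]; exact hanti _ (by omega) _ (by omega) (by omega) s
    obtain ⟨h, hh⟩ : ∃ h : S →ₗ[k] S, ∀ s, h s = I • a (b s) := ⟨I • (a ∘ₗ b), fun s => rfl⟩
    have hhh : ∀ s, h (h s) = s := fun s => by
      simp [hh, hba, haa, hbb, smul_smul, hII]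
    have hha : ∀ s, h (a s) = -a (h s) := fun s => by
      simp [hh, hba, haa]
    have hhg : ∀ i < 2 * n + 1, ∀ s, h (γ i s) = γ i (h s) := fun i hi s => by
      simp [hh, hga i hi, hgb i hi]
    have hb' : ∀ s, b s = I • h (a s) := fun s => by
      simp [hh, hba, haa, smul_smul, hII]
    -- `P` is the `+1`-eigenspace of `h`, and `p` the projection `(1 + h) / 2` onto it
    let P : Submodule k S := LinearMap.ker (h - LinearMap.id)
    have hP : ∀ s, s ∈ P ↔ h s = s := fun s => by
      simp [P, sub_eq_zero]
    let p : S →ₗ[k] P := LinearMap.codRestrict P ((2⁻¹ : k) • (LinearMap.id + h)) fun s => by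
      rw [hP]; simp [hhh, add_comm]
    have hp : ∀ s, (p s : S) = (2⁻¹ : k) • (s + h s) := fun s => rfl
    have half : ∀ s : S, (2⁻¹ : k) • (s + s) = s := fun s => by
      rw [← two_smul k s, smul_smul, inv_mul_cancel₀ two_ne_zero, one_smul]
    have hpu : ∀ u : P, p u = u := fun u => by
      ext; rw [hp, (hP _).1 u.2, half]
    have hpau : ∀ u : P, p (a u) = 0 := fun u => by
      ext; rw [hp, hha, (hP _).1 u.2]; simp
    have hph : ∀ s, p (h s) = p s := fun s => by
      ext; rw [hp, hp, hhh, add_comm]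
    have hpah : ∀ s, p (a (h s)) = -p (a s) := fun s => by
      rw [← hph (a s), hha, map_neg, neg_neg]
    have hdec : ∀ s, s = p s + a (p (a s)) := fun s => by
      rw [hp, hp, hha]
      simp only [map_smul, map_add, map_neg, haa, ← smul_add]
      conv_lhs => rw [← half s]
      congr 1; abel
    -- `s ↦ (p s, p (a s))` identifies `S` with `P × P`
    have hfin : Module.finrank k P = 2 ^ n := by
      let e : S ≃ₗ[k] P × P := LinearEquiv.ofBijective (p.prod (p ∘ₗ a)) ⟨by
        rw [← LinearMap.ker_eq_bot, LinearMap.ker_eq_bot']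
        intro s hs
        have h1 : p s = 0 := congrArg Prod.fst hs
        have h2 : p (a s) = 0 := congrArg Prod.snd hs
        rw [hdec s, h1, h2]; simp, by
        rintro ⟨u, v⟩
        exact ⟨u + a v, by simp [hpu, hpau, haa]⟩⟩
      have := e.finrank_eq
      rw [Module.finrank_prod, hS, pow_succ] at this
      omega
    obtain ⟨g, hg⟩ : ∃ g : ℕ → P →ₗ[k] P, ∀ i, g i = p ∘ₗ γ i ∘ₗ P.subtype := ⟨_, fun _ => rfl⟩
    have hgv : ∀ i < 2 * n + 1, ∀ u : P, (g i u : S) = γ i u := fun i hi u => by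
      have : γ i (u : S) ∈ P := by rw [hP, hhg i hi, (hP _).1 u.2]
      simpa [hg] using congrArg Subtype.val (hpu ⟨_, this⟩)
    have hpg : ∀ i < 2 * n + 1, ∀ s, p (γ i s) = g i (p s) := fun i hi s => by
      ext; rw [hgv i hi, hp, hp, hhg i hi, map_smul, map_add]
    obtain ⟨B, hBn, hBs, hBg⟩ := ih P hfin g
      (fun i hi s => by ext; rw [hgv i hi, hgv i hi, hsq i (by omega)])
      (fun i hi j hj hij s => by
        ext
        rw [hgv i hi, hgv j hj, Submodule.coe_neg, hgv j hj, hgv i hi,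
          hanti i (by omega) j (by omega) hij])
    obtain ⟨ε, hε⟩ : ∃ ε : k, ε = (-1) ^ (n + 1) := ⟨_, rfl⟩
    have hεn : (-1 : k) ^ n = -ε := by rw [hε, pow_succ]; ring
    have hεε : ε * ε = 1 := by rw [hε, ← mul_pow]; simp
    refine ⟨B.compl₁₂ (p ∘ₗ a) p + ε • B.compl₁₂ p (p ∘ₗ a), ?_, ?_, ?_⟩
    · intro s hs
      simp only [LinearMap.add_apply, LinearMap.smul_apply, LinearMap.compl₁₂_apply,
        LinearMap.comp_apply, smul_eq_mul] at hs
      have h1 : p (a s) = 0 := hBn _ fun u => by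
        simpa [hpu, hpau] using hs u
      have h2 : p s = 0 := hBn _ fun u => by
        have := hs (a u)
        rw [haa, hpu, hpau, map_zero, zero_add] at this
        exact (mul_eq_zero.1 this).resolve_left fun h0 => by simp [h0] at hεε
      rw [hdec s, h1, h2]; simp
    · intro s t
      rw [Nat.choose_succ_left _ _ (by norm_num), Nat.choose_one_right, pow_add, ← hε]
      simp only [LinearMap.add_apply, LinearMap.smul_apply, LinearMap.compl₁₂_apply,
        LinearMap.comp_apply, smul_eq_mul]
      rw [hBs (p (a s)), hBs (p s)]
      linear_combination (-(-1) ^ (n + 1).choose 2 * B (p t) (p (a s))) * hεε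
    · intro i hi s t
      rw [← hε]
      simp only [LinearMap.add_apply, LinearMap.smul_apply, LinearMap.compl₁₂_apply,
        LinearMap.comp_apply, smul_eq_mul]
      obtain hi' | rfl | rfl : i < 2 * n + 1 ∨ i = 2 * n + 1 ∨ i = 2 * n + 2 := by omega
      · have hB := hBg i hi'
        rw [hεn] at hB
        simp only [hga i hi', map_neg, hpg i hi', LinearMap.neg_apply, hB]
        ring
      · rw [← ha, haa, haa]
        linear_combination (-B (p s) (p t)) * hεε
      · simp only [← hb, hb', hph, hpah, haa, map_smul, map_neg, LinearMap.smul_apply,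
          LinearMap.neg_apply, smul_eq_mul]
        linear_combination (I * B (p s) (p t)) * hεε

open CliffordAlgebra

/-- Let `k` be an algebraically closed field of characteristic zero and let
`Q` be a nondegenerate quadratic form of rank `2n+1` over `k`, with Clifford algebra `C` and
main anti-involution `*` (which on the even part `C⁺` agrees with `reverse`).  Let `S` be the
`2^n`-dimensional spin representation (a `2^n`-dimensional module over the Clifford algebra;
`GSpin_{2n+1}(k)` is the group of even units `x` with `x · ι(V) · x⁻¹ = ι(V)`, and the spinor
norm is `N(x) = x* x ∈ k^×`).  Then, when `n mod 4` is `0` or `3` (resp. `1` or `2`), there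
exists a nondegenerate symmetric (resp. alternating) bilinear form `β` on `S` such that
`β(xs, xt) = N(x)·β(s,t)` for all `x ∈ GSpin_{2n+1}(k)` and all `s, t ∈ S`; in particular the
spin representation factors through `GO_{2^n}` (resp. `GSp_{2^n}`) with similitude character
equal to the spinor norm. -/
theorem stmt0 (n : ℕ) (k : Type*) [Field k] [IsAlgClosed k] [CharZero k]
    (V : Type*) [AddCommGroup V] [Module k V] [FiniteDimensional k V]
    (hdim : Module.finrank k V = 2 * n + 1)
    (Q : QuadraticForm k V)
    -- `Q` is nondegenerate:
    (hQ : ∀ v : V, (∀ w : V, QuadraticMap.polarBilin Q v w = 0) → v = 0)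
    -- `S` is the spin representation:
    (S : Type*) [AddCommGroup S] [Module k S]
    [Module (CliffordAlgebra Q) S] [IsScalarTower k (CliffordAlgebra Q) S]
    (hS : Module.finrank k S = 2 ^ n) :
    ∃ β : S →ₗ[k] S →ₗ[k] k,
      -- `β` is nondegenerate:
      (∀ s : S, (∀ t : S, β s t = 0) → s = 0) ∧
      -- `β` is symmetric when `n mod 4 ∈ {0, 3}`:
      ((n % 4 = 0 ∨ n % 4 = 3) → ∀ s t : S, β s t = β t s) ∧
      -- `β` is alternating when `n mod 4 ∈ {1, 2}`:
      ((n % 4 = 1 ∨ n % 4 = 2) → ∀ s : S, β s s = 0) ∧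
      -- similitude property: for `x ∈ GSpin_{2n+1}(k)` with spinor norm `N(x) = x* x = c`,
      -- `β(xs, xt) = c · β(s, t)`:
      ∀ x : (CliffordAlgebra Q)ˣ,
        (x : CliffordAlgebra Q) ∈ evenOdd Q 0 →
        (∀ v : V, ∃ w : V, (x : CliffordAlgebra Q) * ι Q v *
          ((x⁻¹ : (CliffordAlgebra Q)ˣ) : CliffordAlgebra Q) = ι Q w) →
        (∀ w : V, ∃ v : V, (x : CliffordAlgebra Q) * ι Q v *
          ((x⁻¹ : (CliffordAlgebra Q)ˣ) : CliffordAlgebra Q) = ι Q w) →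
        ∀ c : k,
          reverse (Q := Q) (x : CliffordAlgebra Q) * (x : CliffordAlgebra Q) =
            algebraMap k (CliffordAlgebra Q) c →
          ∀ s t : S,
            β ((x : CliffordAlgebra Q) • s) ((x : CliffordAlgebra Q) • t) = c * β s t := by
  have : Invertible (2 : k) := invertibleOfNonzero two_ne_zero
  have hsep : (QuadraticMap.associated (R := k) Q).SeparatingLeft := fun v hv => hQ v fun w => by
    have := hv w
    rw [QuadraticMap.associated_apply] at this
    simpa [QuadraticMap.polar] using this
  obtain ⟨E⟩ := Q.equivalent_weightedSumSquares_of_isAlgClosed hsep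
  rw [hdim] at E
  -- `e` is an orthonormal basis of `V`
  obtain ⟨e, he⟩ : ∃ e : Fin (2 * n + 1) → V, ∀ i, e i = E.symm (Pi.single i 1) :=
    ⟨_, fun _ => rfl⟩
  have hQe : ∀ i, Q (e i) = 1 := fun i => by
    rw [he, E.symm.map_app]
    simp [QuadraticMap.weightedSumSquares_apply, Pi.single_apply]
  have hQee : ∀ i j, i ≠ j → Q.IsOrtho (e i) (e j) := fun i j hij => by
    rw [QuadraticMap.isOrtho_def, hQe, hQe, he, he, ← map_add, E.symm.map_app]
    have : ∀ x : Fin (2 * n + 1),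
        ((Pi.single i 1 : Fin (2 * n + 1) → k) x + (Pi.single j 1 : Fin (2 * n + 1) → k) x) *
        ((Pi.single i 1 : Fin (2 * n + 1) → k) x + (Pi.single j 1 : Fin (2 * n + 1) → k) x) =
        (if x = i then 1 else 0) + if x = j then 1 else 0 := fun x => by
      by_cases h1 : x = i <;> by_cases h2 : x = j <;> simp_all [Pi.single_apply]
    simp [QuadraticMap.weightedSumSquares_apply, this, Finset.sum_add_distrib]
  have hspan : ∀ v, v = ∑ i, (E v i) • e i := fun v => by
    apply E.toLinearEquiv.injective
    simp only [map_sum, map_smul]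
    ext j
    simp [he, Pi.single_apply]
  let γ : ℕ → S →ₗ[k] S := fun i => if hi : i < 2 * n + 1 then
    Algebra.lsmul k k S (ι Q (e ⟨i, hi⟩)) else 0
  have hγ : ∀ i : Fin (2 * n + 1), ∀ s, γ i s = ι Q (e i) • s := fun i s => by
    simp only [γ, dif_pos i.2]
    rfl
  obtain ⟨β, hβn, hβs, hβγ⟩ := exists_form k n S hS γ
    (fun i hi s => by
      rw [hγ ⟨i, hi⟩, hγ ⟨i, hi⟩, smul_smul, ι_sq_scalar, hQe, map_one, one_smul])
    (fun i hi j hj hij s => by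
      rw [hγ ⟨i, hi⟩, hγ ⟨i, hi⟩, hγ ⟨j, hj⟩, hγ ⟨j, hj⟩, smul_smul, smul_smul,
        ι_mul_ι_comm_of_isOrtho (hQee _ _ (by simpa using hij)), neg_smul])
  have hβv : ∀ v s t, β (ι Q v • s) t = (-1) ^ n * β s (ι Q v • t) := fun v s t => by
    rw [hspan v]
    simp only [map_sum, map_smul, Finset.sum_smul, smul_assoc, LinearMap.sum_apply,
      LinearMap.smul_apply, smul_eq_mul, Finset.mul_sum]
    refine Finset.sum_congr rfl fun i _ => ?_
    rw [← hγ, ← hγ, hβγ i i.2]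
    ring
  -- the adjoint of `x` is its image under `reverse` (`n` even) or Clifford conjugation (`n` odd)
  have hadj : ∀ x : CliffordAlgebra Q, ∀ s t,
      β (x • s) t = β s ((if Even n then reverse x else reverse (involute x)) • t) := by
    intro x
    induction x using CliffordAlgebra.induction with
    | algebraMap r => intro s t; simp [algebraMap_smul]
    | ι v =>
      intro s t
      rw [hβv]
      by_cases h : Even n
      · simp [h]
      · simp [h, Nat.not_even_iff_odd.1 h]
    | mul x y hx hy =>
      intro s t
      rw [mul_smul, hx, hy, smul_smul]
      split_ifs <;> simp [reverse.map_mul]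
    | add x y hx hy =>
      intro s t
      rw [add_smul, map_add, LinearMap.add_apply, hx, hy, ← map_add, ← add_smul]
      split_ifs <;> simp
  refine ⟨β, hβn, ?_, ?_, ?_⟩
  · intro h s t
    have : Even ((n + 1).choose 2) := by
      rw [Nat.choose_two_right, Nat.add_sub_cancel, Nat.even_iff]
      obtain ⟨q, hq⟩ : ∃ q, q = n / 4 := ⟨_, rfl⟩
      obtain h | h := h
      · obtain rfl : n = 4 * q := by omega
        rw [show (4 * q + 1) * (4 * q) = 2 * (2 * ((4 * q + 1) * q)) by ring]
        omega
      · obtain rfl : n = 4 * q + 3 := by omega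
        rw [show (4 * q + 3 + 1) * (4 * q + 3) = 2 * (2 * ((q + 1) * (4 * q + 3))) by ring]
        omega
    rw [hβs, this.neg_one_pow, one_mul]
  · intro h s
    have : Odd ((n + 1).choose 2) := by
      rw [Nat.choose_two_right, Nat.add_sub_cancel, Nat.odd_iff]
      obtain ⟨q, hq⟩ : ∃ q, q = n / 4 := ⟨_, rfl⟩
      obtain h | h := h
      · obtain rfl : n = 4 * q + 1 := by omega
        rw [show (4 * q + 1 + 1) * (4 * q + 1) = 2 * (2 * (4 * q * q + 3 * q) + 1) by ring]
        omega
      · obtain rfl : n = 4 * q + 2 := by omega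
        rw [show (4 * q + 2 + 1) * (4 * q + 2) = 2 * (2 * (4 * q * q + 5 * q + 1) + 1) by ring]
        omega
    have := hβs s s
    rwa [‹Odd _›.neg_one_pow, neg_one_mul, self_eq_neg] at this
  · intro x hx _ _ c hc s t
    rw [hadj, involute_eq_of_mem_even hx, ite_self, smul_smul, hc, algebraMap_smul, map_smul,
      smul_eq_mul]
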